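/- arXiv:math/9305205 — 7 statements merged into one kernel-verified Lean document; each statement's English description precedes it below -/
import Mathlib

section
/- Any homomorphism from a subgroup H of an abelian group K to ℤ/pℤ can be extended to a homomorphism from K to ℤ/pℤ, provided that H is p-pure in K. Precisely: let K be an abelian group, p a prime, and H a subgroup of K such that for every a ∈ H, if a ∈ pK then a ∈ pH. Then for every group homomorphism h : H → ℤ/pℤ there exists a group homomorphism g : K → ℤ/pℤ whose restriction to H equals h. -/
/-- Any homomorphism from a `p`-pure subgroup `H` of an abelian group `K` to `ℤ/pℤ`
extends to a homomorphism from `K` to `ℤ/pℤ`. -/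
theorem extend_hom_of_pPure (K : Type*) [AddCommGroup K] (p : ℕ) (hp : p.Prime)
    (H : AddSubgroup K)
    (hpure : ∀ a ∈ H, (∃ x : K, p • x = a) → ∃ b ∈ H, p • b = a) :
    ∀ h : H →+ ZMod p, ∃ g : K →+ ZMod p, g.comp H.subtype = h := by
  intro h
  have : Fact p.Prime := ⟨hp⟩
  let A : AddSubgroup H := (nsmulAddMonoidHom (α := H) p).range
  let B : AddSubgroup K := (nsmulAddMonoidHom (α := K) p).range
  let : Module (ZMod p) (H ⧸ A) := QuotientAddGroup.zmodModule (fun x => ⟨x, rfl⟩)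
  let : Module (ZMod p) (K ⧸ B) := QuotientAddGroup.zmodModule (fun x => ⟨x, rfl⟩)
  have hAB : A ≤ B.comap H.subtype := by
    rintro _ ⟨x, rfl⟩
    exact ⟨(x : K), by simp⟩
  let f : (H ⧸ A) →+ (K ⧸ B) := QuotientAddGroup.map A B H.subtype hAB
  have hf : Function.Injective f := by
    rw [injective_iff_map_eq_zero]
    intro a
    induction a using QuotientAddGroup.induction_on with
    | H a =>
      intro ha
      have h1 : (a : K) ∈ B := (QuotientAddGroup.eq_zero_iff (N := B) (a : K)).1 ha
      obtain ⟨x, hx⟩ := h1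
      obtain ⟨b, hb, hba⟩ := hpure a a.2 ⟨x, hx⟩
      exact (QuotientAddGroup.eq_zero_iff (N := A) a).2 ⟨⟨b, hb⟩, Subtype.ext hba⟩
  obtain ⟨r, hr⟩ := (f.toZModLinearMap p).exists_leftInverse_of_injective
    (LinearMap.ker_eq_bot.2 hf)
  have hA : A ≤ h.ker := by
    rintro _ ⟨x, rfl⟩
    simp [AddMonoidHom.mem_ker]
  refine ⟨((QuotientAddGroup.lift A h hA).comp r.toAddMonoidHom).comp (QuotientAddGroup.mk' B), ?_⟩
  ext x
  have h2 : r.toAddMonoidHom (f (QuotientAddGroup.mk x)) = QuotientAddGroup.mk x :=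
    LinearMap.congr_fun hr (QuotientAddGroup.mk x)
  exact congrArg (QuotientAddGroup.lift A h hA) h2
end

section
/- Suppose λ is the minimal cardinality of a non-free coseparable abelian group; that is, there exists a coseparable abelian group of cardinality λ that is not free as a ℤ-module, and every coseparable abelian group of cardinality less than λ is free. Then every coseparable abelian group is λ-free: for every coseparable abelian group A, every subgroup of A of cardinality less than λ is free as a ℤ-module. -/
universe u

/-- An abelian group is coseparable if it is `ℵ₁`-free and for every prime `p`,
every homomorphism to `ℤ/pℤ` lifts to a homomorphism to `ℤ`. -/
def IsCoseparable (A : Type u) [AddCommGroup A] : Prop :=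
  (∀ S : AddSubgroup A, Cardinal.mk S < Cardinal.aleph 1 → Module.Free ℤ S) ∧
  (∀ p : ℕ, p.Prime → ∀ h : A →+ ZMod p,
    ∃ g : A →+ ℤ, (Int.castAddHom (ZMod p)).comp g = h)

/-- An abelian group is free (as a `ℤ`-module). -/
def IsFreeAb (A : Type u) [AddCommGroup A] : Prop := Module.Free ℤ A

theorem cosep_free_finsupp {ι : Type*} (N : Submodule ℤ (ι →₀ ℤ)) : Module.Free ℤ N := by
  classical
  let : LinearOrder ι := linearOrderOfSTO WellOrderingRel
  have wf : WellFounded ((· < ·) : ι → ι → Prop) :=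
    (inferInstance : IsWellFounded ι WellOrderingRel).wf
  have key : ∀ i : ι, ∃ e : N, (∀ j, i < j → e.1 j = 0) ∧
      ∀ f : N, (∀ j, i < j → f.1 j = 0) → ∃ c : ℤ, f.1 i = c * e.1 i := by
    intro i
    let L : Submodule ℤ N :=
      { carrier := {f | ∀ j, i < j → f.1 j = 0}
        add_mem' := by
          intro a b ha hb j hj
          simp [ha j hj, hb j hj]
        zero_mem' := by intro j hj; simp
        smul_mem' := by
          intro c a ha j hj
          simp [ha j hj] }
    let ev : N →ₗ[ℤ] ℤ := (Finsupp.lapply i).comp N.subtype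
    let I : Submodule ℤ ℤ := L.map ev
    obtain ⟨a, ha⟩ := (IsPrincipalIdealRing.principal (R := ℤ) I).principal
    have haI : a ∈ I := by rw [ha]; exact Submodule.mem_span_singleton_self a
    obtain ⟨e, heL, hea⟩ := haI
    refine ⟨e, heL, fun f hf => ?_⟩
    have hfI : ev f ∈ I := ⟨f, hf, rfl⟩
    rw [ha, Submodule.mem_span_singleton] at hfI
    obtain ⟨c, hc⟩ := hfI
    refine ⟨c, ?_⟩
    rw [← hea] at hc
    exact hc.symm
  choose e he1 he2 using key
  let v : {i : ι // (e i).1 i ≠ 0} → N := fun i => e i.1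
  have hli : LinearIndependent ℤ v := by
    rw [linearIndependent_iff]
    intro l hl
    by_contra hne
    have hs : l.support.Nonempty := Finsupp.support_nonempty_iff.2 hne
    obtain ⟨m, hm, hmax⟩ := l.support.exists_max_image (fun i => i.1) hs
    have h1 : (Finsupp.linearCombination ℤ v l).1 m.1 = 0 := by rw [hl]; rfl
    rw [Finsupp.linearCombination_apply, Finsupp.sum] at h1
    have h2 : ((∑ a ∈ l.support, l a • v a : N).1) m.1 = ∑ a ∈ l.support, l a * (v a).1 m.1 := by
      rw [Submodule.coe_sum, Finsupp.finsetSum_apply]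
      rfl
    rw [h2, Finset.sum_eq_single m] at h1
    · rcases mul_eq_zero.1 h1 with h | h
      · exact (Finsupp.mem_support_iff.1 hm) h
      · exact m.2 h
    · intro b hb hbm
      have : b.1 < m.1 := lt_of_le_of_ne (hmax b hb) (fun h => hbm (Subtype.ext h))
      have := he1 b.1 m.1 this
      change l b * (e b.1).1 m.1 = 0
      rw [this, mul_zero]
    · intro h; exact absurd hm h
  have hsp : ∀ i : ι, ∀ f : N, (∀ j, i < j → f.1 j = 0) → f ∈ Submodule.span ℤ (Set.range v) := by
    intro i
    induction i using wf.induction with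
    | _ i ih =>
    intro f hf
    have hcs : ∃ g ∈ Submodule.span ℤ (Set.range v), (∀ j, i < j → g.1 j = 0) ∧ g.1 i = f.1 i := by
      obtain ⟨c, hc⟩ := he2 i f hf
      by_cases h0 : (e i).1 i = 0
      · exact ⟨0, Submodule.zero_mem _, fun j _ => rfl, by rw [hc, h0, mul_zero]; rfl⟩
      · refine ⟨c • e i, Submodule.smul_mem _ _ (Submodule.subset_span ⟨⟨i, h0⟩, rfl⟩), ?_, ?_⟩
        · intro j hj
          simp [he1 i j hj]
        · rw [hc]; rfl
    obtain ⟨g, hg, hg1, hg2⟩ := hcs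
    have hd : f - g ∈ Submodule.span ℤ (Set.range v) := by
      by_cases hz : (f - g).1 = 0
      · have : f - g = 0 := Subtype.ext hz
        rw [this]; exact Submodule.zero_mem _
      · have hs : (f - g).1.support.Nonempty := Finsupp.support_nonempty_iff.2 hz
        have hmem := Finset.max'_mem _ hs
        have hle : ∀ j ∈ (f - g).1.support, j ≤ (f - g).1.support.max' hs :=
          fun j hj => Finset.le_max' _ j hj
        generalize (f - g).1.support.max' hs = m at hmem hle
        have hmi : m < i := by
          by_contra hlt
          apply Finsupp.mem_support_iff.1 hmem
          rcases (not_lt.1 hlt).eq_or_lt with h | h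
          · subst h; simp [hg2]
          · simp [hf m h, hg1 m h]
        refine ih m hmi _ fun j hj => ?_
        by_contra hj0
        exact absurd (hle j (Finsupp.mem_support_iff.2 hj0)) (not_le.2 hj)
    have := Submodule.add_mem _ hd hg
    simpa using this
  refine Module.Free.of_basis (Module.Basis.mk hli ?_)
  intro f _
  by_cases hz : f.1 = 0
  · have : f = 0 := Subtype.ext hz
    rw [this]; exact Submodule.zero_mem _
  · have hs : f.1.support.Nonempty := Finsupp.support_nonempty_iff.2 hz
    refine hsp (f.1.support.max' hs) f fun j hj => ?_
    by_contra hj0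
    exact absurd (Finset.le_max' _ j (Finsupp.mem_support_iff.2 hj0)) (not_le.2 hj)

theorem cosep_free_of_inj {G H : Type*} [AddCommGroup G] [AddCommGroup H]
    (hH : Module.Free ℤ H) (f : G →+ H) (hf : Function.Injective f) : Module.Free ℤ G := by
  let b := Module.Free.chooseBasis ℤ H
  let F : G →ₗ[ℤ] (Module.Free.ChooseBasisIndex ℤ H →₀ ℤ) :=
    b.repr.toLinearMap.comp f.toIntLinearMap
  have hF : Function.Injective F := b.repr.injective.comp hf
  have := cosep_free_finsupp (LinearMap.range F)
  exact Module.Free.of_equiv (LinearEquiv.ofInjective F hF).symm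

theorem cosep_split {V W : Type*} [AddCommGroup V] [AddCommGroup W] (p : ℕ) (hp : p.Prime)
    (hV : ∀ x : V, p • x = 0) (hW : ∀ x : W, p • x = 0) (m : V →+ W)
    (hm : Function.Injective m) : ∃ g : W →+ V, ∀ x, g (m x) = x := by
  have : Fact p.Prime := ⟨hp⟩
  let _ : Module (ZMod p) V := AddCommGroup.zmodModule hV
  let _ : Module (ZMod p) W := AddCommGroup.zmodModule hW
  obtain ⟨g, hg⟩ := LinearMap.exists_leftInverse_of_injective (m.toZModLinearMap p)
    (LinearMap.ker_eq_bot.2 hm)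
  exact ⟨g.toAddMonoidHom, fun x => LinearMap.congr_fun hg x⟩

theorem cosep_extend {A : Type*} [AddCommGroup A] (B : AddSubgroup A) (p : ℕ) (hp : p.Prime)
    (hB : ∀ a : A, p • a ∈ B → a ∈ B) (h : B →+ ZMod p) :
    ∃ g : A →+ ZMod p, ∀ b : B, g b = h b := by
  let KA : AddSubgroup A := (nsmulAddMonoidHom p : A →+ A).range
  let KB : AddSubgroup B := (nsmulAddMonoidHom p : B →+ B).range
  let h' : B ⧸ KB →+ ZMod p := QuotientAddGroup.lift KB h (by
    rintro _ ⟨x, rfl⟩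
    simp)
  let m : B ⧸ KB →+ A ⧸ KA := QuotientAddGroup.map KB KA B.subtype (by
    rintro _ ⟨x, rfl⟩
    exact ⟨x.1, rfl⟩)
  have hm : Function.Injective m := by
    rw [injective_iff_map_eq_zero]
    intro x
    induction x using QuotientAddGroup.induction_on with
    | H x =>
    intro hx
    have hx' : ((x.1 : A) : A ⧸ KA) = 0 := hx
    rw [QuotientAddGroup.eq_zero_iff] at hx' ⊢
    obtain ⟨a, ha⟩ := hx'
    have ha' : p • a = x.1 := ha
    exact ⟨⟨a, hB a (ha' ▸ x.2)⟩, Subtype.ext ha'⟩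
  obtain ⟨g, hg⟩ := cosep_split p hp (by
    intro x
    induction x using QuotientAddGroup.induction_on with
    | H x =>
    rw [← QuotientAddGroup.mk_nsmul, QuotientAddGroup.eq_zero_iff]
    exact ⟨x, rfl⟩) (by
    intro x
    induction x using QuotientAddGroup.induction_on with
    | H x =>
    rw [← QuotientAddGroup.mk_nsmul, QuotientAddGroup.eq_zero_iff]
    exact ⟨x, rfl⟩) m hm
  refine ⟨(h'.comp g).comp (QuotientAddGroup.mk' KA), fun b => ?_⟩
  change h' (g (m (b : B ⧸ KB))) = h b
  rw [hg]
  rfl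

/-- If `λ` is the minimal cardinality of a non-free coseparable abelian group,
then every coseparable abelian group is `λ`-free. -/
theorem coseparable_lambda_free (lam : Cardinal.{u})
    (hex : ∃ (A₀ : Type u) (inst : AddCommGroup A₀),
      @IsCoseparable A₀ inst ∧ ¬ @IsFreeAb A₀ inst ∧ Cardinal.mk A₀ = lam)
    (hmin : ∀ (A : Type u) [AddCommGroup A],
      Cardinal.mk A < lam → IsCoseparable A → IsFreeAb A)
    (A : Type u) [AddCommGroup A] (hA : IsCoseparable A)
    (S : AddSubgroup A) (hS : Cardinal.mk S < lam) :
    Module.Free ℤ S := by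
  obtain ⟨hfree, hlift⟩ := hA
  rcases lt_or_ge (Cardinal.mk S) (Cardinal.aleph 1) with hc | hc
  · exact hfree S hc
  have hinf : Cardinal.aleph0 ≤ Cardinal.mk S :=
    (Cardinal.aleph0_le_aleph 1).trans hc
  have htf : ∀ (n : ℕ) (x : A), n ≠ 0 → n • x = 0 → x = 0 := by
    intro n x hn hx
    have : Countable (AddSubgroup.zmultiples x) :=
      Set.countable_range (fun k : ℤ => k • x) |>.to_subtype
    have : Module.Free ℤ (AddSubgroup.zmultiples x) :=
      hfree _ (lt_of_le_of_lt Cardinal.mk_le_aleph0 Cardinal.aleph0_lt_aleph_one)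
    have h1 : (n : ℤ) • (⟨x, AddSubgroup.mem_zmultiples x⟩ : AddSubgroup.zmultiples x) = 0 := by
      apply Subtype.ext
      simpa using hx
    rcases smul_eq_zero.1 h1 with h | h
    · exact absurd (by exact_mod_cast h) hn
    · exact congrArg Subtype.val h
  let P : AddSubgroup A :=
    { carrier := {x | ∃ n : ℕ, n ≠ 0 ∧ n • x ∈ S}
      zero_mem' := ⟨1, one_ne_zero, by simp⟩
      add_mem' := by
        rintro a b ⟨n, hn, ha⟩ ⟨m, hm, hb⟩
        refine ⟨n * m, mul_ne_zero hn hm, ?_⟩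
        rw [smul_add]
        refine S.add_mem ?_ ?_
        · rw [mul_comm, mul_smul]; exact S.nsmul_mem ha m
        · rw [mul_smul]; exact S.nsmul_mem hb n
      neg_mem' := by
        rintro a ⟨n, hn, ha⟩
        exact ⟨n, hn, by rw [smul_neg]; exact S.neg_mem ha⟩ }
  have hSP : S ≤ P := fun x hx => ⟨1, one_ne_zero, by simpa using hx⟩
  have hcard : Cardinal.mk P ≤ Cardinal.mk S := by
    have hP : ∀ x : P, ∃ n : ℕ, n ≠ 0 ∧ n • x.1 ∈ S := fun x => x.2
    choose n hn hx using hP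
    have hinj : Function.Injective (fun x : P => (ULift.up.{u} (n x), (⟨n x • x.1, hx x⟩ : S))) := by
      intro x y hxy
      have h1 : n x = n y := congrArg (fun q => q.1.down) hxy
      have h2 : n x • x.1 = n y • y.1 := congrArg (fun q => q.2.1) hxy
      rw [← h1] at h2
      apply Subtype.ext
      apply sub_eq_zero.1
      exact htf (n x) _ (hn x) (by rw [smul_sub, h2, sub_self])
    refine (Cardinal.mk_le_of_injective hinj).trans ?_
    rw [Cardinal.mk_prod, Cardinal.lift_id, Cardinal.lift_id]
    refine (Cardinal.mul_le_max_of_aleph0_le_right hinf).trans ?_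
    exact max_le (Cardinal.mk_le_aleph0.trans hinf) le_rfl
  have hPc : IsCoseparable P := by
    constructor
    · intro T hT
      have hT' : Cardinal.mk (T.map P.subtype) < Cardinal.aleph 1 :=
        lt_of_le_of_lt Cardinal.mk_image_le hT
      refine cosep_free_of_inj (hfree _ hT')
        (P.subtype.addSubgroupMap T) ?_
      intro x y hxy
      have : (x.1.1 : A) = y.1.1 :=
        congrArg (fun z : T.map P.subtype => (z.1 : A)) hxy
      exact Subtype.ext (Subtype.ext this)
    · intro p hp h
      obtain ⟨g, hg⟩ := cosep_extend P p hp (by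
        rintro a ⟨n, hn, ha⟩
        exact ⟨n * p, mul_ne_zero hn hp.ne_zero, by rwa [mul_smul]⟩) h
      obtain ⟨k, hk⟩ := hlift p hp g
      refine ⟨k.comp P.subtype, ?_⟩
      ext b
      rw [← hg b, ← hk]
      rfl
  have hPf : Module.Free ℤ P := hmin P (hcard.trans_lt hS) hPc
  exact cosep_free_of_inj hPf (AddSubgroup.inclusion hSP) (AddSubgroup.inclusion_injective hSP)
end

section
/- Let p be a prime, F a free abelian group, F̂ the p-adic completion of F, and A a p-pure subgroup of F̂. Let h : A → ℤ/pℤ be a group homomorphism and ĥ : A → ℤ a lifting of h. If x, y, a ∈ A and n ∈ ℕ are such that ĥ(x) = ĥ(y) and x − y − pⁿ·a ∈ pⁿ⁺¹·F̂, then h(a) = 0. (This is Proposition 3 of the paper: if x, y are written as p-adic sums x = Σ pᵐ xₘ, y = Σ pᵐ yₘ over a basis of F with coefficients in [0, p−1], ĥ(x) = ĥ(y), and n is least with xₙ ≠ yₙ, then h(xₙ) = h(yₙ); the element a plays the role of xₙ − yₙ.) -/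
theorem aux_tf (p : ℕ) (hp : p.Prime)
    (F : Type*) [AddCommGroup F] [Module.Free ℤ F]
    (w : AdicCompletion (Ideal.span {(p : ℤ)}) F) (hw : p • w = 0) : w = 0 := by
  have key : ∀ (m : ℕ) (g : F), g ∈ ((Ideal.span {(p : ℤ)}) ^ m • ⊤ : Submodule ℤ F) ↔
      ∃ f : F, ((p : ℤ) ^ m) • f = g := by
    intro m g
    rw [Ideal.span_singleton_pow, Submodule.ideal_span_singleton_smul,
      Submodule.mem_smul_pointwise_iff_exists]
    simp
  apply AdicCompletion.ext
  intro n
  obtain ⟨f, hf⟩ := Submodule.Quotient.mk_surjective _ (w.val (n + 1))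
  have h1 : (p • w).val (n + 1) = 0 := by rw [hw]; rfl
  have h2 : (p • w).val (n + 1) = p • w.val (n + 1) := by
    exact map_nsmul (AdicCompletion.eval (Ideal.span {(p : ℤ)}) F (n+1)) p w
  rw [h2, ← hf, ← Submodule.Quotient.mk_smul, Submodule.Quotient.mk_eq_zero, key] at h1
  obtain ⟨g, hg⟩ := h1
  have hp0 : (p : ℤ) ≠ 0 := by exact_mod_cast hp.ne_zero
  have h3 : ((p : ℤ) ^ n) • g = f := by
    apply smul_right_injective F hp0
    simp only [smul_smul]
    rw [← pow_succ', hg, natCast_zsmul]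
  have h4 := AdicCompletion.transitionMap_comp_eval_apply (I := Ideal.span {(p : ℤ)}) (M := F) (Nat.le_succ n) w
  have h5 : w.val n = Submodule.Quotient.mk f := by
    have := w.2 (Nat.le_succ n)
    rw [← this]
    change AdicCompletion.transitionMap _ _ _ (w.val (n+1)) = _
    rw [← hf]; rfl
  rw [h5]
  exact (Submodule.Quotient.mk_eq_zero _).2 ((key n f).2 ⟨g, h3⟩)

/-- Proposition 3 of the paper: if `A` is a `p`-pure subgroup of the `p`-adic completion
of a free abelian group `F`, `ĥ` is a lifting of `h : A → ℤ/pℤ`, `ĥ(x) = ĥ(y)` and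
`x - y - pⁿ·a ∈ pⁿ⁺¹·F̂`, then `h(a) = 0`. -/
theorem prop_one (p : ℕ) (hp : p.Prime)
    (F : Type*) [AddCommGroup F] [Module.Free ℤ F]
    (A : AddSubgroup (AdicCompletion (Ideal.span {(p : ℤ)}) F))
    (hpure : ∀ a ∈ A, (∃ b ∈ A, p • b = a) ↔
      (∃ x : AdicCompletion (Ideal.span {(p : ℤ)}) F, p • x = a))
    (h : A →+ ZMod p) (hh : A →+ ℤ)
    (hlift : (Int.castAddHom (ZMod p)).comp hh = h)
    (x y a : A) (n : ℕ)
    (hxy : hh x = hh y)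
    (hdiv : ∃ z : AdicCompletion (Ideal.span {(p : ℤ)}) F,
      (x : AdicCompletion (Ideal.span {(p : ℤ)}) F) - y - p ^ n • (a : AdicCompletion (Ideal.span {(p : ℤ)}) F) = p ^ (n + 1) • z) :
    h a = 0 := by
  obtain ⟨z, hz⟩ := hdiv
  have tf := aux_tf p hp F
  have descend : ∀ m : ℕ, p ^ m • z ∈ A → z ∈ A := by
    intro m
    induction m with
    | zero => intro hm; simpa using hm
    | succ m ih =>
      intro hm
      apply ih
      obtain ⟨b, hb, hb2⟩ := (hpure _ hm).2 ⟨p ^ m • z, by rw [smul_smul, pow_succ']⟩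
      have : b - p ^ m • z = 0 := by
        apply tf
        rw [smul_sub, hb2, smul_smul, pow_succ', sub_self]
      rw [← sub_eq_zero.1 this]
      exact hb
  have hzA : z ∈ A := by
    apply descend (n + 1)
    rw [← hz]
    exact A.sub_mem (A.sub_mem x.2 y.2) (A.nsmul_mem a.2 _)
  have e : x - y - p ^ n • a = p ^ (n + 1) • (⟨z, hzA⟩ : A) := Subtype.ext hz
  have e2 := congrArg hh e
  simp only [map_sub, map_nsmul, hxy, sub_self, zero_sub, nsmul_eq_mul] at e2
  push_cast at e2
  have hp0 : (p : ℤ) ^ n ≠ 0 := pow_ne_zero _ (by exact_mod_cast hp.ne_zero)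
  have e3 : hh a = p * (-hh ⟨z, hzA⟩) := by
    apply mul_left_cancel₀ hp0
    rw [pow_succ] at e2
    linarith
  rw [← hlift]
  simp [e3]
end

section
/- Let A be an abelian group, p a prime, and (aₙ)ₙ∈ℕ a sequence of elements of A that is ℤ-linearly independent (so the subgroup S generated by {aₙ : n ∈ ℕ} is free with basis the aₙ) and such that S is p-pure in A. Suppose that for every n, every group homomorphism h : A → ℤ/pℤ with h(aₙ) ≠ 0 has no lifting to ℤ. Then there is a family (h_s) of group homomorphisms A → ℤ/pℤ indexed by s : ℕ → {0,1} such that for all s ≠ t, the homomorphism h_s − h_t has no lifting to ℤ; in particular h_s and h_t represent distinct elements of Ext_p(A, ℤ), so Ext_p(A, ℤ) has cardinality at least 2^ℵ₀. -/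
/-- If `(aₙ)` is a `ℤ`-linearly independent sequence in an abelian group `A` generating a
`p`-pure subgroup, and every homomorphism `A → ℤ/pℤ` which is nonzero on some `aₙ` has no
lifting to `ℤ`, then there is a family of `2^ℵ₀` homomorphisms `A → ℤ/pℤ`, indexed by
`s : ℕ → Bool`, any two of which differ by a homomorphism with no lifting to `ℤ`
(hence represent distinct elements of `Ext_p(A, ℤ)`). -/
theorem ext_p_large (A : Type*) [AddCommGroup A] (p : ℕ) (hp : p.Prime)
    (a : ℕ → A) (hli : LinearIndependent ℤ a)
    (hpure : ∀ x ∈ AddSubgroup.closure (Set.range a),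
      (∃ b ∈ AddSubgroup.closure (Set.range a), p • b = x) ↔ (∃ y : A, p • y = x))
    (hbad : ∀ (n : ℕ) (h : A →+ ZMod p), h (a n) ≠ 0 →
      ¬ ∃ g : A →+ ℤ, (Int.castAddHom (ZMod p)).comp g = h) :
    ∃ h : (ℕ → Bool) → (A →+ ZMod p),
      ∀ s t : ℕ → Bool, s ≠ t →
        ¬ ∃ g : A →+ ℤ, (Int.castAddHom (ZMod p)).comp g = h s - h t := by
  classical
  haveI : Fact p.Prime := ⟨hp⟩
  let P : AddSubgroup A := (nsmulAddMonoidHom (α := A) p).range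
  let π : A →+ A ⧸ P := QuotientAddGroup.mk' P
  have hsurj : Function.Surjective π := QuotientAddGroup.mk'_surjective P
  have hker : ∀ x : A, π x = 0 ↔ ∃ y : A, p • y = x := fun x => by
    have : π x = 0 ↔ x ∈ P := QuotientAddGroup.eq_zero_iff x
    rw [this]
    exact AddMonoidHom.mem_range
  letI : Module (ZMod p) (A ⧸ P) := AddCommGroup.zmodModule (n := p) (by
    intro x
    obtain ⟨y, rfl⟩ := hsurj x
    rw [← map_nsmul, hker]
    exact ⟨y, rfl⟩)
  have hind : LinearIndependent (ZMod p) (fun n => π (a n)) := by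
    rw [linearIndependent_iff']
    intro S g hg i hi
    have h1 : π (∑ j ∈ S, (g j).val • a j) = 0 := by
      rw [map_sum, ← hg]
      refine Finset.sum_congr rfl fun j _ => ?_
      rw [map_nsmul, ← Nat.cast_smul_eq_nsmul (ZMod p), ZMod.natCast_zmod_val]
    have hmem : (∑ j ∈ S, (g j).val • a j) ∈ AddSubgroup.closure (Set.range a) :=
      AddSubgroup.sum_mem _ fun j _ =>
        AddSubgroup.nsmul_mem _ (AddSubgroup.subset_closure (Set.mem_range_self j)) _
    obtain ⟨b, hb, hbx⟩ := (hpure _ hmem).2 ((hker _).1 h1)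
    have hb' : b ∈ Submodule.span ℤ (Set.range a) := by
      rw [← Submodule.mem_toAddSubgroup, Submodule.span_int_eq_addSubgroupClosure]
      exact hb
    obtain ⟨d, rfl⟩ := (Finsupp.mem_span_range_iff_exists_finsupp).1 hb'
    have h2 : Finsupp.linearCombination ℤ a
        (∑ j ∈ S, Finsupp.single j ((g j).val : ℤ)) = Finsupp.linearCombination ℤ a (p • d) := by
      rw [map_sum, map_nsmul, Finsupp.linearCombination_apply, hbx]
      refine Finset.sum_congr rfl fun j _ => ?_
      rw [Finsupp.linearCombination_single, natCast_zsmul]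
    have h3 := DFunLike.congr_fun (hli h2) i
    have h4 : ((g i).val : ℤ) = p * d i := by
      simpa [Finsupp.finsetSum_apply, Finsupp.single_apply, hi] using h3
    have h5 := congrArg (Int.cast : ℤ → ZMod p) h4
    simpa using h5
  obtain ⟨r, hr⟩ := LinearMap.exists_leftInverse_of_injective
    (Finsupp.linearCombination (ZMod p) (fun n => π (a n))) (LinearMap.ker_eq_bot.2 hind)
  let h : (ℕ → Bool) → (A →+ ZMod p) := fun s =>
    ((Finsupp.linearCombination (ZMod p) (fun n => if s n then (1 : ZMod p) else 0)).comp
      r).toAddMonoidHom.comp π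
  have hh : ∀ s n, h s (a n) = if s n then (1 : ZMod p) else 0 := by
    intro s n
    have h1 := LinearMap.congr_fun hr (Finsupp.single n 1)
    simp only [LinearMap.comp_apply, Finsupp.linearCombination_single, one_smul,
      LinearMap.id_apply] at h1
    have h2 : h s (a n) = Finsupp.linearCombination (ZMod p)
        (fun n => if s n then (1 : ZMod p) else 0) (Finsupp.single n (1 : ZMod p)) :=
      congrArg (Finsupp.linearCombination (ZMod p)
        (fun n => if s n then (1 : ZMod p) else 0)) h1
    rw [h2, Finsupp.linearCombination_single, one_smul]
  refine ⟨h, fun s t hst => ?_⟩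
  obtain ⟨n, hn⟩ := Function.ne_iff.1 hst
  refine hbad n _ ?_
  rw [AddMonoidHom.sub_apply, hh, hh]
  cases hs : s n <;> cases ht : t n <;> simp_all
end

section
/- Let A be an abelian group, B a subgroup of A, p a prime, and π : A → A/B the quotient map. Suppose k : A/B → ℤ/pℤ is a group homomorphism that has no lifting to ℤ. Let f : B → ℤ be a group homomorphism and let g₀, g₁ : A → ℤ/pℤ be group homomorphisms with g₁ − g₀ = k ∘ π. Then at most one of g₀, g₁ admits a lifting extending f: there do not exist group homomorphisms f₀, f₁ : A → ℤ such that for each i ∈ {0,1}, fᵢ restricted to B equals f and the reduction of fᵢ modulo p equals gᵢ. -/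
/-- If `k : A/B → ℤ/pℤ` has no lifting to `ℤ` and `g₁ - g₀ = k ∘ π`, then at most one
of `g₀, g₁` admits a lifting to `ℤ` extending a given `f : B → ℤ`. -/
theorem at_most_one_lifting (A : Type*) [AddCommGroup A] (B : AddSubgroup A)
    (p : ℕ) (hp : p.Prime)
    (k : A ⧸ B →+ ZMod p)
    (hk : ¬ ∃ K : A ⧸ B →+ ℤ, (Int.castAddHom (ZMod p)).comp K = k)
    (f : B →+ ℤ) (g₀ g₁ : A →+ ZMod p)
    (hg : g₁ - g₀ = k.comp (QuotientAddGroup.mk' B)) :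
    ¬ ∃ f₀ f₁ : A →+ ℤ,
      f₀.comp B.subtype = f ∧ (Int.castAddHom (ZMod p)).comp f₀ = g₀ ∧
      f₁.comp B.subtype = f ∧ (Int.castAddHom (ZMod p)).comp f₁ = g₁ := by
  rintro ⟨f₀, f₁, h0, h0', h1, h1'⟩
  apply hk
  refine ⟨QuotientAddGroup.lift B (f₁ - f₀) ?_, ?_⟩
  · intro b hb
    have e0 := DFunLike.congr_fun h0 ⟨b, hb⟩
    have e1 := DFunLike.congr_fun h1 ⟨b, hb⟩
    simp at e0 e1
    simp [e0, e1]
  · ext a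
    have e := DFunLike.congr_fun hg a
    subst h0' h1'
    simpa using e
end

section
/- Suppose that λ is a cardinal of cofinality ω such that 2^λ = λ⁺, the principle *(λ, ℵ₀) holds, and 2^μ < λ for every infinite cardinal μ < λ. Then there exists a non-free coseparable abelian group; more precisely, there is an abelian group G of cardinality λ⁺ (= 2^λ) such that G is ℵ₁-free, G is not free as a ℤ-module, and for every prime p every group homomorphism h : G → ℤ/pℤ has a lifting to ℤ. -/
/-- The principle `*(λ, ℵ₀)`: there is a family of `λ⁺` countably infinite subsets of `λ`
such that any `λ` of them can be simultaneously refined, by removing finitely many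
elements from each, to a pairwise disjoint family. -/
def StarPrinciple (lam : Cardinal.{0}) : Prop :=
  ∃ S : Ordinal.{0} → Set Ordinal.{0},
    (∀ i : Ordinal.{0}, i < (Order.succ lam).ord →
      S i ⊆ Set.Iio lam.ord ∧ (S i).Countable ∧ (S i).Infinite) ∧
    ∀ I : Set Ordinal.{0}, I ⊆ Set.Iio (Order.succ lam).ord →
      Cardinal.mk I = Cardinal.lift.{1} lam →
      ∃ S' : Ordinal.{0} → Set Ordinal.{0},
        (∀ i ∈ I, (S i \ S' i).Finite) ∧
        (∀ i ∈ I, ∀ j ∈ I, i ≠ j → Disjoint (S' i) (S' j))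

theorem cs_free_sub {ι : Type} (C : Submodule ℤ (ι →₀ ℤ)) : Module.Free ℤ C := by
  classical
  obtain ⟨hlo, hwf⟩ := exists_wellFoundedLT ι
  -- leading coefficient ideals
  let D : ι → Submodule ℤ (ι →₀ ℤ) := fun i =>
    { carrier := {c | c ∈ C ∧ ∀ k, i < k → c k = 0}
      add_mem' := by
        rintro a b ⟨ha, ha'⟩ ⟨hb, hb'⟩
        exact ⟨C.add_mem ha hb, fun k hk => by simp [ha' k hk, hb' k hk]⟩
      zero_mem' := ⟨C.zero_mem, fun k hk => rfl⟩
      smul_mem' := by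
        rintro r a ⟨ha, ha'⟩
        exact ⟨C.smul_mem r ha, fun k hk => by simp [ha' k hk]⟩ }
  have hD : ∀ i c, c ∈ D i ↔ c ∈ C ∧ ∀ k, i < k → c k = 0 := fun i c => Iff.rfl
  have h1 : ∀ i, ∃ c ∈ D i, ∀ d ∈ D i, ∃ r : ℤ, d i = r * c i := by
    intro i
    let J : Ideal ℤ := (D i).map (Finsupp.lapply i)
    have hg : Submodule.IsPrincipal.generator J ∈ J := Submodule.IsPrincipal.generator_mem J
    obtain ⟨c, hc, hc'⟩ := hg
    refine ⟨c, hc, fun d hd => ?_⟩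
    have : d i ∈ J := ⟨d, hd, rfl⟩
    obtain ⟨r, hr⟩ := (Submodule.IsPrincipal.mem_iff_eq_smul_generator J).1 this
    refine ⟨r, ?_⟩
    rw [← hc'] at hr
    simpa using hr
  choose c hcD hc using h1
  let B := {i : ι // c i i ≠ 0}
  let b : B → C := fun j => ⟨c j.1, (hcD j.1).1⟩
  have hli : LinearIndependent ℤ b := by
    rw [linearIndependent_iff]
    intro l hl
    by_contra hne
    have hs : l.support.Nonempty := Finsupp.support_nonempty_iff.2 hne
    set j := l.support.max' hs with hj
    have hjm : j ∈ l.support := Finset.max'_mem _ _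
    have h2 : ((Finsupp.linearCombination ℤ b l : C) : ι →₀ ℤ) j.1 = 0 := by rw [hl]; rfl
    rw [Finsupp.linearCombination_apply, Finsupp.sum, Submodule.coe_sum, Finsupp.finsetSum_apply,
      Finset.sum_eq_single j] at h2
    · have : l j * c j.1 j.1 = 0 := by simpa [b] using h2
      rcases mul_eq_zero.1 this with h | h
      · exact (Finsupp.mem_support_iff.1 hjm) h
      · exact j.2 h
    · intro k hk hkj
      have hlt : k < j := lt_of_le_of_ne (Finset.le_max' _ _ hk) hkj
      have := (hcD k.1).2 j.1 hlt
      simp [b, this]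
    · intro h; exact absurd hjm h
  have hspan : ∀ i, ∀ d (hd : d ∈ D i), (⟨d, hd.1⟩ : C) ∈ Submodule.span ℤ (Set.range b) := by
    intro i
    induction i using hwf.induction with
    | _ i ih =>
    intro d hd
    have key : ∀ e (he : e ∈ D i), e i = 0 → (⟨e, he.1⟩ : C) ∈ Submodule.span ℤ (Set.range b) := by
      intro e he hei
      by_cases hne : e = 0
      · subst hne; exact Submodule.zero_mem _
      · have hs : e.support.Nonempty := Finsupp.support_nonempty_iff.2 hne
        have hm : e.support.max' hs ∈ e.support := Finset.max'_mem _ _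
        have hlt : e.support.max' hs < i := by
          by_contra hcon
          rcases eq_or_lt_of_le (not_lt.1 hcon) with h | h
          · rw [← h] at hm; exact (Finsupp.mem_support_iff.1 hm) hei
          · exact (Finsupp.mem_support_iff.1 hm) (he.2 _ h)
        refine ih _ hlt e ⟨he.1, fun k hk => ?_⟩
        by_contra hk0
        exact absurd (Finset.le_max' _ _ (Finsupp.mem_support_iff.2 hk0)) (not_le.2 hk)
    obtain ⟨r, hr⟩ := hc i d hd
    by_cases h0 : c i i = 0
    · exact key d hd (by rw [hr, h0, mul_zero])
    · have he : d - r • c i ∈ D i := (D i).sub_mem hd ((D i).smul_mem r (hcD i))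
      have h3 := key _ he (by simp [hr])
      have h4 : b ⟨i, h0⟩ ∈ Submodule.span ℤ (Set.range b) := Submodule.subset_span ⟨_, rfl⟩
      have h5 := Submodule.add_mem _ h3 (Submodule.smul_mem _ r h4)
      convert h5 using 1
      ext1
      simp [b]
  refine Module.Free.of_basis (Module.Basis.mk hli ?_)
  rintro ⟨d, hd⟩ -
  by_cases hne : d = 0
  · subst hne; exact Submodule.zero_mem _
  · have hs : d.support.Nonempty := Finsupp.support_nonempty_iff.2 hne
    refine hspan (d.support.max' hs) d ⟨hd, fun k hk => ?_⟩
    by_contra hk0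
    exact absurd (Finset.le_max' _ _ (Finsupp.mem_support_iff.2 hk0)) (not_le.2 hk)

theorem cs_free_of_inj {M N : Type} [AddCommGroup M] [AddCommGroup N] [Module.Free ℤ N]
    (f : M →ₗ[ℤ] N) (hf : Function.Injective f) : Module.Free ℤ M := by
  let b := Module.Free.chooseBasis ℤ N
  let g : M →ₗ[ℤ] (Module.Free.ChooseBasisIndex ℤ N →₀ ℤ) := b.repr.toLinearMap ∘ₗ f
  have hg : Function.Injective g := b.repr.injective.comp hf
  have := cs_free_sub (LinearMap.range g)
  exact Module.Free.of_equiv (LinearEquiv.ofInjective g hg).symm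

theorem cs_star (lam : Cardinal.{0}) (hinf : Cardinal.aleph0 ≤ lam) (hstar : StarPrinciple lam) :
    ∃ s : (Order.succ lam).ord.ToType → ℕ → lam.ord.ToType, (∀ i, Function.Injective (s i)) ∧
      ∀ I : Set (Order.succ lam).ord.ToType, Cardinal.mk I ≤ lam →
        ∃ N : (Order.succ lam).ord.ToType → ℕ, ∀ i ∈ I, ∀ j ∈ I, ∀ n, N i ≤ n → ∀ m, N j ≤ m →
          s i n = s j m → i = j := by
  classical
  obtain ⟨S, hS, hdis⟩ := hstar
  let o : (Order.succ lam).ord.ToType → Ordinal := fun i => (i.toOrd : Ordinal)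
  have ho : Function.Injective o := fun a b h => by
    have : a.toOrd = b.toOrd := Subtype.ext h
    exact (Ordinal.ToType.mk.symm).injective this
  have hlt : ∀ i, o i < (Order.succ lam).ord := fun i => i.toOrd.2
  let em : ∀ i, ℕ ↪ S (o i) := fun i => (hS (o i) (hlt i)).2.2.natEmbedding
  have hem : ∀ i n, (em i n : Ordinal) < lam.ord := fun i n => (hS (o i) (hlt i)).1 (em i n).2
  refine ⟨fun i n => Ordinal.ToType.mk ⟨em i n, hem i n⟩, ?_, ?_⟩
  · intro i n m h
    have := Ordinal.ToType.mk.injective h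
    have h2 : (em i n : Ordinal) = em i m := Subtype.mk.inj this
    exact (em i).injective (Subtype.ext h2)
  · intro I hI
    have hle : lam ≤ Cardinal.mk (Order.succ lam).ord.ToType := by
      simpa using Order.le_succ lam
    obtain ⟨P, hP⟩ := Cardinal.le_mk_iff_exists_set.1 hle
    have hcard : Cardinal.mk (I ∪ P : Set _) = lam := by
      apply le_antisymm
      · exact (Cardinal.mk_union_le I P).trans (Cardinal.add_le_of_le hinf hI hP.le)
      · exact hP.symm.le.trans (Cardinal.mk_le_mk_of_subset Set.subset_union_right)
    have hc2 : Cardinal.mk (o '' (I ∪ P)) = Cardinal.lift.{1} lam := by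
      have := Cardinal.mk_image_eq_lift o (I ∪ P) ho
      rw [hcard] at this
      simpa using this
    obtain ⟨S', hfin, hd⟩ := hdis (o '' (I ∪ P)) (by rintro _ ⟨i, -, rfl⟩; exact hlt i) hc2
    have hN : ∀ i, ∃ N : ℕ, i ∈ I → ∀ n, N ≤ n → (em i n : Ordinal) ∈ S' (o i) := by
      intro i
      by_cases hi : i ∈ I
      · have hf : {n | (em i n : Ordinal) ∉ S' (o i)}.Finite := by
          refine Set.Finite.of_finite_image (f := fun n => (em i n : Ordinal)) ?_ ?_
          · refine (hfin (o i) ⟨i, Or.inl hi, rfl⟩).subset ?_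
            rintro _ ⟨n, hn, rfl⟩
            exact ⟨(em i n).2, hn⟩
          · intro a _ b _ h
            exact (em i).injective (Subtype.ext h)
        obtain ⟨N, hN⟩ := hf.bddAbove
        refine ⟨N + 1, fun _ n hn => ?_⟩
        by_contra hcon
        have := hN (show n ∈ _ from hcon)
        omega
      · exact ⟨0, fun h => absurd h hi⟩
    choose N hN using hN
    refine ⟨N, fun i hi j hj n hn m hm h => ?_⟩
    by_contra hij
    have h1 := hN i hi n hn
    have h2 := hN j hj m hm
    have h3 : (em i n : Ordinal) = em j m := congrArg Subtype.val (Ordinal.ToType.mk.injective h)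
    rw [h3] at h1
    exact Set.disjoint_left.1 (hd (o i) ⟨i, Or.inl hi, rfl⟩ (o j) ⟨j, Or.inl hj, rfl⟩
      (fun h => hij (ho h))) h1 h2

theorem cs_filt (lam : Cardinal.{0}) (hcof : lam.ord.cof = Cardinal.aleph0)
    (hinf : Cardinal.aleph0 ≤ lam) (J : Type) (hJ : Cardinal.mk J ≤ lam) :
    ∃ A : ℕ → Set J, (∀ n, Cardinal.mk (A n) < lam) ∧ ∀ j, ∃ n0, ∀ n, n0 ≤ n → j ∈ A n := by
  classical
  obtain ⟨t, ht, htc⟩ := Order.exists_cof_eq lam.ord.ToType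
  rw [Ordinal.cof_toType, hcof] at htc
  obtain ⟨e⟩ := Cardinal.eq.1 (htc.trans Cardinal.mk_nat.symm)
  have hle : Cardinal.mk J ≤ Cardinal.mk lam.ord.ToType := by simpa using hJ
  obtain ⟨r⟩ := hle
  let c : ℕ → lam.ord.ToType := fun n => (e.symm n).1
  have hIic : ∀ k : lam.ord.ToType, Cardinal.mk (Set.Iic k) < lam := by
    intro k
    have := Cardinal.mk_Iic_lt k (by simp) (by simpa using hinf)
    simpa using this
  let A : ℕ → Set J := fun n => {j | ∃ m ≤ n, r j ≤ c m}
  refine ⟨A, ?_, ?_⟩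
  · have h0 : ∀ m, Cardinal.mk {j | r j ≤ c m} < lam := by
      intro m
      refine lt_of_le_of_lt ?_ (hIic (c m))
      exact ⟨⟨fun j => ⟨r j.1, j.2⟩, fun a b h => by
        have := congrArg Subtype.val h
        exact Subtype.ext (r.injective this)⟩⟩
    intro n
    induction n with
    | zero =>
      refine lt_of_le_of_lt (Cardinal.mk_le_mk_of_subset ?_) (h0 0)
      rintro j ⟨m, hm, h⟩
      obtain rfl : m = 0 := by omega
      exact h
    | succ n ih =>
      refine lt_of_le_of_lt (Cardinal.mk_le_mk_of_subset (t := A n ∪ {j | r j ≤ c (n+1)}) ?_)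
        (lt_of_le_of_lt (Cardinal.mk_union_le _ _) (Cardinal.add_lt_of_lt hinf ih (h0 (n+1))))
      rintro j ⟨m, hm, h⟩
      rcases Nat.lt_or_ge n m with h' | h'
      · obtain rfl : m = n + 1 := by omega
        exact Or.inr h
      · exact Or.inl ⟨m, h', h⟩
  · intro j
    obtain ⟨k, hk, hjk⟩ := ht (r j)
    refine ⟨e ⟨k, hk⟩, fun n hn => ⟨e ⟨k, hk⟩, hn, ?_⟩⟩
    simpa [c] using hjk

theorem cs_pigeon (lam : Cardinal.{0}) (hcof : lam.ord.cof = Cardinal.aleph0)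
    (hinf : Cardinal.aleph0 ≤ lam)
    (hsmall : ∀ μ : Cardinal.{0}, Cardinal.aleph0 ≤ μ → μ < lam → 2 ^ μ < lam)
    (J K : Type) (hJ : Cardinal.mk J ≤ lam) (hK : Cardinal.mk K = lam)
    (g : ℕ → J → K → ℤ) (hg : ∀ n j, (Set.range (g n j)).Finite) :
    ∃ z : ℕ → K × K, (∀ n, (z n).1 ≠ (z n).2) ∧
      ∀ j, ∃ n0, ∀ n, n0 ≤ n → g n j (z n).1 = g n j (z n).2 := by
  obtain ⟨A, hA, hA'⟩ := cs_filt lam hcof hinf J hJ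
  have key : ∀ n, ∃ z : K × K, z.1 ≠ z.2 ∧ ∀ j ∈ A n, g n j z.1 = g n j z.2 := by
    intro n
    let f : K → (A n → ℤ) := fun k j => g n j.1 k
    have hf : ¬ Function.Injective f := by
      intro hinj
      by_cases hfin : Finite (A n)
      · have h1 : (Set.range f).Finite := by
          refine (Set.Finite.pi (fun j : A n => hg n j.1)).subset ?_
          rintro _ ⟨k, rfl⟩ j -
          exact ⟨k, rfl⟩
        have h2 : Finite K := by
          have := h1.to_subtype
          exact Finite.of_injective (Set.rangeFactorization f)
            (fun a b h => hinj (congrArg Subtype.val h))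
        have := Cardinal.lt_aleph0_of_finite K
        rw [hK] at this
        exact absurd this (not_lt.2 hinf)
      · have h1 : Cardinal.aleph0 ≤ Cardinal.mk (A n) := by
          rw [not_finite_iff_infinite] at hfin
          exact Cardinal.aleph0_le_mk _
        have h2 : Cardinal.mk K ≤ Cardinal.mk (A n → ℤ) := Cardinal.mk_le_of_injective hinj
        have h3 : Cardinal.mk (A n → ℤ) ≤ 2 ^ Cardinal.mk (A n) := by
          rw [← Cardinal.power_def, ← Cardinal.power_self_eq h1]
          apply Cardinal.power_le_power_right
          simpa using h1
        have := hsmall _ h1 (hA n)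
        rw [hK] at h2
        exact absurd (h2.trans h3) (not_le.2 this)
    simp only [Function.Injective, not_forall] at hf
    obtain ⟨a, b, hab, hne⟩ := hf
    exact ⟨(a, b), hne, fun j hj => congrFun hab ⟨j, hj⟩⟩
  choose z hz hz' using key
  refine ⟨z, hz, fun j => ?_⟩
  obtain ⟨n0, h⟩ := hA' j
  exact ⟨n0, fun n hn => hz' n j (h n hn)⟩

/-- The group presented by generators `x k` (`k ∈ K × K`) and `y i n`, with the relations
`y i n = n! * y i (n+1) + x (s i n, a) - x (s i n, b)`, where `(a, b) = z i n`. -/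
noncomputable def CsRel {K L : Type} (s : L → ℕ → K) (z : L → ℕ → K × K) :
    AddSubgroup (((K × K) ⊕ (L × ℕ)) →₀ ℤ) :=
  AddSubgroup.closure (Set.range fun q : L × ℕ =>
    Finsupp.single (Sum.inr q) 1 - ((q.2.factorial : ℤ) • Finsupp.single (Sum.inr (q.1, q.2 + 1)) 1
      + Finsupp.single (Sum.inl (s q.1 q.2, (z q.1 q.2).1)) 1
      - Finsupp.single (Sum.inl (s q.1 q.2, (z q.1 q.2).2)) 1))

abbrev CsG {K L : Type} (s : L → ℕ → K) (z : L → ℕ → K × K) : Type :=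
  (((K × K) ⊕ (L × ℕ)) →₀ ℤ) ⧸ CsRel s z

section
variable {K L : Type} (s : L → ℕ → K) (z : L → ℕ → K × K)

noncomputable def csx (k : K × K) : CsG s z :=
  QuotientAddGroup.mk (Finsupp.single (Sum.inl k) 1)

noncomputable def csy (i : L) (n : ℕ) : CsG s z :=
  QuotientAddGroup.mk (Finsupp.single (Sum.inr (i, n)) 1)

/-- solutions of the system -/
def CsSol {A : Type} [AddCommGroup A] (s : L → ℕ → K) (z : L → ℕ → K × K)
    (f : K × K → A) (i : L) (Y : ℕ → A) : Prop :=
  ∀ n, Y n = (n.factorial : ℤ) • Y (n + 1) + f (s i n, (z i n).1) - f (s i n, (z i n).2)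

theorem cs_rel (i : L) : CsSol s z (csx s z) i (csy s z i) := by
  intro n
  have : Finsupp.single (Sum.inr (i, n)) 1 -
      ((n.factorial : ℤ) • Finsupp.single (Sum.inr (i, n + 1)) 1
      + Finsupp.single (Sum.inl (s i n, (z i n).1)) 1
      - Finsupp.single (Sum.inl (s i n, (z i n).2)) 1) ∈ CsRel s z :=
    AddSubgroup.subset_closure ⟨(i, n), rfl⟩
  have h := (QuotientAddGroup.eq_zero_iff _).2 this
  rw [QuotientAddGroup.mk_sub, sub_eq_zero] at h
  exact h

theorem cs_hom {A : Type} [AddCommGroup A] (f : K × K → A) (Y : L → ℕ → A)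
    (h : ∀ i, CsSol s z f i (Y i)) :
    ∃ φ : CsG s z →+ A, (∀ k, φ (csx s z k) = f k) ∧ ∀ i n, φ (csy s z i n) = Y i n := by
  let φ₀ : (((K × K) ⊕ (L × ℕ)) →₀ ℤ) →ₗ[ℤ] A :=
    Finsupp.linearCombination ℤ (Sum.elim f (fun q => Y q.1 q.2))
  have hk : CsRel s z ≤ φ₀.toAddMonoidHom.ker := by
    refine (AddSubgroup.closure_le _).2 ?_
    rintro _ ⟨⟨i, n⟩, rfl⟩
    have := h i n
    simp [φ₀, AddMonoidHom.mem_ker, sub_eq_zero]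
    simpa using this
  refine ⟨QuotientAddGroup.lift _ φ₀.toAddMonoidHom hk, fun k => ?_, fun i n => ?_⟩
  · simp [csx, φ₀]
  · simp [csy, φ₀]

theorem cs_ind (M : Submodule ℤ (CsG s z)) (T : Set L) (hx : ∀ k, csx s z k ∈ M)
    (hy : ∀ i ∈ T, ∀ n, csy s z i n ∈ M) (c : ((K × K) ⊕ (L × ℕ)) →₀ ℤ)
    (hc : ∀ q, Sum.inr q ∈ c.support → q.1 ∈ T) :
    (QuotientAddGroup.mk c : CsG s z) ∈ M := by
  have : (QuotientAddGroup.mk c : CsG s z) =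
      c.sum fun t r => r • (QuotientAddGroup.mk (Finsupp.single t 1) : CsG s z) := by
    conv_lhs => rw [← Finsupp.sum_single c]
    simp only [Finsupp.sum]
    rw [← QuotientAddGroup.mk'_apply, map_sum]
    refine Finset.sum_congr rfl fun t _ => ?_
    rw [← QuotientAddGroup.mk'_apply, ← map_zsmul]
    simp
  rw [this]
  refine Submodule.sum_mem _ fun t ht => Submodule.smul_mem _ _ ?_
  rcases t with k | ⟨i, n⟩
  · exact hx k
  · exact hy i (hc _ ht) n

theorem cs_hom_ext {A : Type} [AddCommGroup A] (φ ψ : CsG s z →+ A)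
    (hx : ∀ k, φ (csx s z k) = ψ (csx s z k)) (hy : ∀ i n, φ (csy s z i n) = ψ (csy s z i n)) :
    φ = ψ := by
  refine DFunLike.ext _ _ fun g => ?_
  obtain ⟨c, rfl⟩ := QuotientAddGroup.mk_surjective g
  have := cs_ind s z (LinearMap.eqLocus φ.toIntLinearMap ψ.toIntLinearMap) Set.univ
    (fun k => hx k) (fun i _ n => hy i n) c (fun _ _ => trivial)
  exact this

/-- homs to `ZMod p` are determined by the `x`s -/
theorem cs_det {p : ℕ} (hp : p.Prime) (φ ψ : CsG s z →+ ZMod p)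
    (hx : ∀ k, φ (csx s z k) = ψ (csx s z k)) : φ = ψ := by
  refine cs_hom_ext s z φ ψ hx fun i n => ?_
  have step : ∀ n, φ (csy s z i n) - ψ (csy s z i n) =
      (n.factorial : ZMod p) * (φ (csy s z i (n + 1)) - ψ (csy s z i (n + 1))) := by
    intro n
    have h := cs_rel s z i n
    have h1 := congrArg φ h
    have h2 := congrArg ψ h
    rw [h1, h2]
    simp only [map_add, map_sub, map_zsmul, hx, zsmul_eq_mul]
    push_cast
    ring
  have big : ∀ n, p ≤ n → φ (csy s z i n) - ψ (csy s z i n) = 0 := by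
    intro n hn
    rw [step n, (ZMod.natCast_eq_zero_iff _ _).2 (Nat.dvd_factorial hp.pos hn), zero_mul]
  have all : ∀ d n, p ≤ n + d → φ (csy s z i n) - ψ (csy s z i n) = 0 := by
    intro d
    induction d with
    | zero => intro n hn; exact big n hn
    | succ d ih =>
      intro n hn
      rw [step n, ih (n + 1) (by omega), mul_zero]
  exact sub_eq_zero.1 (all p n (by omega))

theorem cs_zero (φ : CsG s z →+ ℤ) (hx : ∀ k, φ (csx s z k) = 0) : φ = 0 := by
  refine DFunLike.ext _ _ fun g => ?_
  change φ g = 0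
  by_contra hne
  obtain ⟨p, hp1, hp⟩ := Nat.exists_infinite_primes ((φ g).natAbs + 1)
  have h := cs_det s z hp ((Int.castAddHom (ZMod p)).comp φ) 0 (fun k => by simp [hx k])
  have h2 : ((φ g : ℤ) : ZMod p) = 0 := by simpa using DFunLike.congr_fun h g
  rw [ZMod.intCast_zmod_eq_zero_iff_dvd] at h2
  have h3 := Int.natAbs_dvd_natAbs.2 h2
  have h4 := Nat.le_of_dvd (Int.natAbs_pos.2 hne) h3
  simp at h4
  omega

/-- upward solution in a rational vector space -/
theorem cs_sol_rat {V : Type} [AddCommGroup V] [Module ℚ V] (f : K × K → V) (i : L) (v : V) :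
    ∃ Y : ℕ → V, CsSol s z f i Y ∧ Y 0 = v := by
  let Y : ℕ → V := fun n => Nat.rec v (fun n Yn =>
    ((n.factorial : ℚ)⁻¹) • (Yn - (f (s i n, (z i n).1) - f (s i n, (z i n).2)))) n
  refine ⟨Y, fun n => ?_, rfl⟩
  have h : Y (n + 1) = ((n.factorial : ℚ)⁻¹) • (Y n -
    (f (s i n, (z i n).1) - f (s i n, (z i n).2))) := rfl
  have h0 : (n.factorial : ℚ) ≠ 0 := by exact_mod_cast n.factorial_ne_zero
  have h2 : (n.factorial : ℤ) • Y (n + 1) = (n.factorial : ℚ) • Y (n + 1) := by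
    rw [natCast_zsmul]; exact (Nat.cast_smul_eq_nsmul ℚ _ _).symm
  rw [h2, h, smul_smul, mul_inv_cancel₀ h0, one_smul]
  abel

/-- downward solution -/
theorem cs_sol_down {A : Type} [AddCommGroup A] (f : K × K → A) (i : L) (N : ℕ) (v : ℕ → A)
    (hv : ∀ n, N ≤ n →
      v n = (n.factorial : ℤ) • v (n + 1) + f (s i n, (z i n).1) - f (s i n, (z i n).2)) :
    ∃ Y : ℕ → A, CsSol s z f i Y ∧ ∀ n, N ≤ n → Y n = v n := by
  induction N generalizing v with
  | zero => exact ⟨v, fun n => hv n (Nat.zero_le _), fun _ _ => rfl⟩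
  | succ N ih =>
    let v' : ℕ → A := Function.update v N
      ((N.factorial : ℤ) • v (N + 1) + f (s i N, (z i N).1) - f (s i N, (z i N).2))
    obtain ⟨Y, hY, hYv⟩ := ih v' (by
      intro n hn
      rcases eq_or_lt_of_le hn with rfl | h
      · simp [v']
      · have h1 : n ≠ N := by omega
        have h2 : n + 1 ≠ N := by omega
        simp only [v', Function.update_of_ne h1, Function.update_of_ne h2]
        exact hv n h)
    refine ⟨Y, hY, fun n hn => ?_⟩
    rw [hYv n (by omega)]
    have h1 : n ≠ N := by omega
    simp only [v', Function.update_of_ne h1]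

/-- marked generators -/
def CsMark (s : L → ℕ → K) (z : L → ℕ → K × K) (I : Set L) (N : L → ℕ) (k : K × K) (q : L × ℕ) :
    Prop := q.1 ∈ I ∧ N q.1 ≤ q.2 ∧ k = (s q.1 q.2, (z q.1 q.2).1)

theorem cs_stage {A : Type} [AddCommGroup A] (hs : ∀ i, Function.Injective (s i))
    (hz : ∀ i n, (z i n).1 ≠ (z i n).2)
    (I : Set L) (N : L → ℕ)
    (hN : ∀ i ∈ I, ∀ j ∈ I, ∀ n, N i ≤ n → ∀ m, N j ≤ m → s i n = s j m → i = j)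
    (w : K × K → A) (v : L → ℕ → A) :
    ∃ f : K × K → A,
      (∀ k, (∀ q, ¬ CsMark s z I N k q) → f k = w k) ∧
      (∀ k q, CsMark s z I N k q → f k = w (k.1, (z q.1 q.2).2) + v q.1 q.2 -
        (q.2.factorial : ℤ) • v q.1 (q.2 + 1)) ∧
      (∀ a, {b | f (a, b) ≠ w (a, b)}.Subsingleton) ∧
      ∀ i ∈ I, ∃ Y : ℕ → A, CsSol s z f i Y ∧ ∀ n, N i ≤ n → Y n = v i n := by
  classical
  have huniq : ∀ a b b' q q', CsMark s z I N (a, b) q → CsMark s z I N (a, b') q' → q = q' := by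
    rintro a b b' ⟨i, n⟩ ⟨j, m⟩ ⟨h1, h2, h3⟩ ⟨h1', h2', h3'⟩
    have e1 := congrArg Prod.fst h3
    have e2 := congrArg Prod.fst h3'
    simp only at *
    have hij := hN i h1 j h1' n h2 m h2' (e1.symm.trans e2)
    subst hij
    rw [hs i (e1.symm.trans e2)]
  let f : K × K → A := fun k => if h : ∃ q, CsMark s z I N k q then
    w (k.1, (z h.choose.1 h.choose.2).2) + v h.choose.1 h.choose.2 -
        (h.choose.2.factorial : ℤ) • v h.choose.1 (h.choose.2 + 1) else w k
  have hf1 : ∀ k, (∀ q, ¬ CsMark s z I N k q) → f k = w k := by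
    intro k hk
    exact dif_neg (by rintro ⟨q, hq⟩; exact hk q hq)
  have hf2 : ∀ k q, CsMark s z I N k q → f k = w (k.1, (z q.1 q.2).2) + v q.1 q.2 -
        (q.2.factorial : ℤ) • v q.1 (q.2 + 1) := by
    intro k q hq
    have h : ∃ q, CsMark s z I N k q := ⟨q, hq⟩
    have e : h.choose = q := huniq k.1 k.2 k.2 _ _ h.choose_spec hq
    have : f k = _ := dif_pos h
    rw [this, e]
  refine ⟨f, hf1, hf2, ?_, ?_⟩
  · intro a b hb b' hb'
    have hm : ∀ b, f (a, b) ≠ w (a, b) → ∃ q, CsMark s z I N (a, b) q := by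
      intro b hb
      by_contra hcon
      push Not at hcon
      exact hb (hf1 _ hcon)
    obtain ⟨q, hq⟩ := hm b hb
    obtain ⟨q', hq'⟩ := hm b' hb'
    obtain rfl := huniq _ _ _ _ _ hq hq'
    have := hq.2.2.trans hq'.2.2.symm
    exact congrArg Prod.snd this
  · intro i hi
    refine cs_sol_down s z f i (N i) (v i) fun n hn => ?_
    have hm : CsMark s z I N (s i n, (z i n).1) (i, n) := ⟨hi, hn, rfl⟩
    have e1 := hf2 _ _ hm
    have e2 : f (s i n, (z i n).2) = w (s i n, (z i n).2) := by
      refine hf1 _ fun q hq => ?_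
      obtain rfl := huniq _ _ _ _ _ hm hq
      have := congrArg Prod.snd hq.2.2
      exact hz i n this.symm
    rw [e1, e2]
    simp only
    abel

theorem cs_free_stage (hs : ∀ i, Function.Injective (s i))
    (hz : ∀ i n, (z i n).1 ≠ (z i n).2)
    (I : Set L) (N : L → ℕ)
    (hN : ∀ i ∈ I, ∀ j ∈ I, ∀ n, N i ≤ n → ∀ m, N j ≤ m → s i n = s j m → i = j) :
    ∃ M : Submodule ℤ (CsG s z), Module.Free ℤ M ∧ (∀ k, csx s z k ∈ M) ∧
      ∀ i ∈ I, ∀ n, csy s z i n ∈ M := by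
  classical
  let Γ := (K × K) ⊕ (L × ℕ)
  obtain ⟨f, hf1, hf2, -, hf4⟩ := cs_stage s z (A := Γ →₀ ℚ) hs hz I N hN
    (fun k => Finsupp.single (Sum.inl k) 1) (fun i n => Finsupp.single (Sum.inr (i, n)) 1)
  have hY : ∀ i, ∃ Y : ℕ → (Γ →₀ ℚ), CsSol s z f i Y ∧ (i ∈ I → ∀ n, N i ≤ n →
      Y n = Finsupp.single (Sum.inr (i, n)) 1) := by
    intro i
    by_cases hi : i ∈ I
    · obtain ⟨Y, h1, h2⟩ := hf4 i hi
      exact ⟨Y, h1, fun _ => h2⟩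
    · obtain ⟨Y, h1, -⟩ := cs_sol_rat s z f i 0
      exact ⟨Y, h1, fun h => absurd h hi⟩
  choose Y hY1 hY2 using hY
  obtain ⟨φ, hφx, hφy⟩ := cs_hom s z f Y hY1
  let P : Γ → Prop := Sum.elim (fun k => ∀ q, ¬ CsMark s z I N k q) (fun q => q.1 ∈ I ∧ N q.1 ≤ q.2)
  let b0 : Γ → CsG s z := Sum.elim (csx s z) (fun q => csy s z q.1 q.2)
  let b : {t : Γ // P t} → CsG s z := fun t => b0 t.1
  have hφb : ∀ t : {t : Γ // P t}, φ (b t) = Finsupp.single t.1 1 := by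
    rintro ⟨t | q, ht⟩
    · exact (hφx t).trans (hf1 t ht)
    · exact (hφy q.1 q.2).trans (hY2 q.1 ht.1 q.2 ht.2)
  have hli : LinearIndependent ℤ b := by
    refine LinearIndependent.of_comp φ.toIntLinearMap ?_
    have h1 : LinearIndependent ℚ (fun t : {t : Γ // P t} => (Finsupp.single t.1 1 : Γ →₀ ℚ)) :=
      (Finsupp.linearIndependent_single_one ℚ Γ).comp _ Subtype.val_injective
    have h2 := h1.restrict_scalars (R := ℤ) (by
      intro a b h
      simpa using h)
    have h3 : φ.toIntLinearMap ∘ b = fun t : {t : Γ // P t} => (Finsupp.single t.1 1 : Γ →₀ ℚ) :=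
      funext hφb
    rw [h3]
    exact h2
  have hy1 : ∀ i ∈ I, ∀ n, N i ≤ n → csy s z i n ∈ Submodule.span ℤ (Set.range b) := by
    intro i hi n hn
    exact Submodule.subset_span ⟨⟨Sum.inr (i, n), ⟨hi, hn⟩⟩, rfl⟩
  have hx1 : ∀ k, (∀ q, ¬ CsMark s z I N k q) → csx s z k ∈ Submodule.span ℤ (Set.range b) := by
    intro k hk
    exact Submodule.subset_span ⟨⟨Sum.inl k, hk⟩, rfl⟩
  have hx : ∀ k, csx s z k ∈ Submodule.span ℤ (Set.range b) := by
    intro k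
    by_cases hk : ∀ q, ¬ CsMark s z I N k q
    · exact hx1 k hk
    · push Not at hk
      obtain ⟨⟨i, n⟩, hi, hn, rfl⟩ := hk
      simp only at hi hn ⊢
      have h2 : csx s z (s i n, (z i n).2) ∈ Submodule.span ℤ (Set.range b) := by
        refine hx1 _ ?_
        rintro ⟨j, m⟩ ⟨hj, hm, he⟩
        have e1 := congrArg Prod.fst he
        simp only at e1 hj hm
        obtain rfl := hN i hi j hj n hn m hm e1
        obtain rfl := hs i e1
        exact hz i n (congrArg Prod.snd he).symm
      have h := cs_rel s z i n
      have h3 : csx s z (s i n, (z i n).1) = csy s z i n - (n.factorial : ℤ) • csy s z i (n + 1)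
          + csx s z (s i n, (z i n).2) := by
        rw [h]; abel
      rw [h3]
      exact Submodule.add_mem _ (Submodule.sub_mem _ (hy1 i hi n hn)
        (Submodule.smul_mem _ _ (hy1 i hi (n + 1) (by omega)))) h2
  refine ⟨Submodule.span ℤ (Set.range b), Module.Free.of_basis (Module.Basis.span hli), hx, ?_⟩
  intro i hi
  have all : ∀ d n, N i ≤ n + d → csy s z i n ∈ Submodule.span ℤ (Set.range b) := by
    intro d
    induction d with
    | zero => intro n hn; exact hy1 i hi n hn
    | succ d ih =>
      intro n hn
      rw [cs_rel s z i n]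
      exact Submodule.sub_mem _ (Submodule.add_mem _ (Submodule.smul_mem _ _
        (ih (n + 1) (by omega))) (hx _)) (hx _)
  exact fun n => all (N i) n (by omega)

end

def CsGood {K L : Type} [LT L] (s : L → ℕ → K) (e : L → ℕ × (K × K → ℤ))
    (z : L → ℕ → K × K) (j : L) (g : K × K → ℤ) : Prop :=
  (∀ a, (Set.range fun b => g (a, b)).Finite) ∧
  (∀ k, (g k : ZMod (e j).1) = ((e j).2 k : ZMod (e j).1)) ∧
  ∀ i, i < j → ∃ Y, CsSol s z g i Y

open Classical in
noncomputable def CsPick {X : Type} (P : (X → ℤ) → Prop) : X → ℤ :=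
  if h : ∃ g, P g then h.choose else 0

theorem cs_good_congr {K L : Type} [LT L] (s : L → ℕ → K) (e : L → ℕ × (K × K → ℤ))
    (z z' : L → ℕ → K × K) (j : L) (h : ∀ i, i < j → z i = z' i) :
    CsGood s e z j = CsGood s e z' j := by
  funext g
  have : ∀ i, i < j → ∀ Y : ℕ → ℤ, CsSol s z g i Y = CsSol s z' g i Y := by
    intro i hi Y
    unfold CsSol
    rw [h i hi]
  unfold CsGood
  refine congrArg _ (congrArg _ ?_)
  refine forall_congr fun i => forall_congr fun hi => ?_
  simp only [this i hi]

theorem cs_construct {K L : Type} [Nonempty K] [LinearOrder L] [WellFoundedLT L] (s : L → ℕ → K)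
    (e : L → ℕ × (K × K → ℤ))
    (pig : ∀ i (g : L → K × K → ℤ), (∀ j a, (Set.range fun b => g j (a, b)).Finite) →
      ∃ z : ℕ → K × K, (∀ n, (z n).1 ≠ (z n).2) ∧ ∀ j, j ≤ i → ∃ n0, ∀ n, n0 ≤ n →
        g j (s i n, (z n).1) = g j (s i n, (z n).2)) :
    ∃ z : L → ℕ → K × K, (∀ i n, (z i n).1 ≠ (z i n).2) ∧
      ∀ j, (∃ g, CsGood s e z j g) → ∃ g, CsGood s e z j g ∧
        ∀ i, j ≤ i → ∃ n0, ∀ n, n0 ≤ n → g (s i n, (z i n).1) = g (s i n, (z i n).2) := by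
  classical
  obtain ⟨k0⟩ := (inferInstance : Nonempty K)
  let Gof : (L → ℕ → K × K) → L → (K × K → ℤ) := fun z j => CsPick (CsGood s e z j)
  have hGof : ∀ z j, (∃ g, CsGood s e z j g) → CsGood s e z j (Gof z j) := by
    intro z j h
    have : Gof z j = h.choose := dif_pos h
    rw [this]; exact h.choose_spec
  have hfin : ∀ z j a, (Set.range fun b => Gof z j (a, b)).Finite := by
    intro z j a
    by_cases h : ∃ g, CsGood s e z j g
    · exact (hGof z j h).1 a
    · have : Gof z j = 0 := dif_neg h
      rw [this]
      exact (Set.finite_singleton (0 : ℤ)).subset (by rintro _ ⟨b, rfl⟩; rfl)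
  choose Zof hZ1 hZ2 using fun (zp : L → ℕ → K × K) (i : L) => pig i (Gof zp) (hfin zp)
  let z : L → ℕ → K × K := (wellFounded_lt (α := L)).fix fun i rec =>
    Zof (fun i' => if h : i' < i then rec i' h else fun _ => (k0, k0)) i
  have hz : ∀ i, z i = Zof (fun i' => if i' < i then z i' else fun _ => (k0, k0)) i := by
    intro i
    have := (wellFounded_lt (α := L)).fix_eq (fun i rec =>
      Zof (fun i' => if h : i' < i then rec i' h else fun _ => (k0, k0)) i) i
    refine this.trans ?_
    congr 1
  refine ⟨z, fun i n => by rw [hz i]; exact hZ1 _ i n, fun j hj => ⟨Gof z j, hGof z j hj, ?_⟩⟩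
  intro i hji
  obtain ⟨n0, h⟩ := hZ2 (fun i' => if i' < i then z i' else fun _ => (k0, k0)) i j hji
  refine ⟨n0, fun n hn => ?_⟩
  have h1 := h n hn
  rw [← hz i] at h1
  have h2 : Gof (fun i' => if i' < i then z i' else fun _ => (k0, k0)) j = Gof z j := by
    refine congrArg CsPick (cs_good_congr s e _ _ j fun i' hi' => ?_)
    rw [if_pos (hi'.trans_le hji)]
  rw [h2] at h1
  exact h1

theorem cs_lift {K L : Type} [LinearOrder L] (s : L → ℕ → K) (e : L → ℕ × (K × K → ℤ))
    (he : Function.Surjective e)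
    (z : L → ℕ → K × K) (hs : ∀ i, Function.Injective (s i)) (hz : ∀ i n, (z i n).1 ≠ (z i n).2)
    (hstar : ∀ j : L, ∃ N : L → ℕ, ∀ i ∈ Set.Iio j, ∀ i' ∈ Set.Iio j, ∀ n, N i ≤ n → ∀ m, N i' ≤ m →
      s i n = s i' m → i = i')
    (hgood : ∀ j, (∃ g, CsGood s e z j g) → ∃ g, CsGood s e z j g ∧
        ∀ i, j ≤ i → ∃ n0, ∀ n, n0 ≤ n → g (s i n, (z i n).1) = g (s i n, (z i n).2))
    (p : ℕ) (hp : p.Prime) (h : CsG s z →+ ZMod p) :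
    ∃ g : CsG s z →+ ℤ, (Int.castAddHom (ZMod p)).comp g = h := by
  have : NeZero p := ⟨hp.ne_zero⟩
  let u : K × K → ℤ := fun k => ((h (csx s z k)).val : ℤ)
  have hu : ∀ k, (u k : ZMod p) = h (csx s z k) := fun k => by simp [u]
  obtain ⟨j, hj⟩ := he (p, u)
  obtain ⟨N, hN⟩ := hstar j
  obtain ⟨f, hf1, hf2, hf3, hf4⟩ := cs_stage s z hs hz (Set.Iio j) N hN u
    (fun i n => ((h (csy s z i n)).val : ℤ))
  have hgj : CsGood s e z j f := by
    refine ⟨fun a => ?_, ?_, fun i hi => ?_⟩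
    · have hfu : (Set.range u).Finite := by
        refine (Set.finite_range (fun t : ZMod p => (t.val : ℤ))).subset ?_
        rintro _ ⟨k, rfl⟩
        exact ⟨h (csx s z k), rfl⟩
      refine (hfu.union ((hf3 a).finite.image fun b => f (a, b))).subset ?_
      rintro _ ⟨b, rfl⟩
      by_cases hb : f (a, b) = u (a, b)
      · exact Or.inl ⟨(a, b), hb.symm⟩
      · exact Or.inr ⟨b, hb, rfl⟩
    · rw [hj]
      intro k
      simp only
      rw [hu]
      by_cases hk : ∀ q, ¬ CsMark s z (Set.Iio j) N k q
      · rw [hf1 k hk, hu]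
      · push Not at hk
        obtain ⟨⟨i, n⟩, hq⟩ := hk
        rw [hf2 k _ hq]
        obtain ⟨-, -, rfl⟩ := hq
        have hr := congrArg h (cs_rel s z i n)
        simp only [map_add, map_sub, map_zsmul, zsmul_eq_mul] at hr
        push_cast at hr ⊢
        simp only [smul_eq_mul, hu]
        push_cast
        rw [ZMod.natCast_zmod_val, ZMod.natCast_zmod_val, hr]
        ring
    · obtain ⟨Y, hY, -⟩ := hf4 i hi
      exact ⟨Y, hY⟩
  obtain ⟨g, ⟨-, hg2, hg3⟩, hg4⟩ := hgood j ⟨f, hgj⟩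
  have hY : ∀ i, ∃ Y : ℕ → ℤ, CsSol s z g i Y := by
    intro i
    rcases lt_or_ge i j with hi | hi
    · exact hg3 i hi
    · obtain ⟨n0, hn0⟩ := hg4 i hi
      obtain ⟨Y, hY, -⟩ := cs_sol_down s z g i n0 (fun _ => 0) (fun n hn => by simp [hn0 n hn])
      exact ⟨Y, hY⟩
  choose Y hY using hY
  obtain ⟨φ, hφ, -⟩ := cs_hom s z g Y hY
  refine ⟨φ, cs_det s z hp _ _ fun k => ?_⟩
  rw [hj] at hg2
  have := hg2 k
  simp only at this
  rw [hu] at this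
  simpa [hφ] using this

theorem exists_nonfree_coseparable (lam : Cardinal.{0})
    (hcof : lam.ord.cof = Cardinal.aleph0)
    (hch : 2 ^ lam = Order.succ lam)
    (hstar : StarPrinciple lam)
    (hsmall : ∀ μ : Cardinal.{0}, Cardinal.aleph0 ≤ μ → μ < lam → 2 ^ μ < lam) :
    ∃ (G : Type) (inst : AddCommGroup G),
      Cardinal.mk G = Order.succ lam ∧
      (∀ S : @AddSubgroup G (inst.toAddGroup), Cardinal.mk S < Cardinal.aleph 1 →
        Module.Free ℤ S) ∧
      ¬ Module.Free ℤ G ∧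
      (∀ p : ℕ, p.Prime → ∀ h : G →+ ZMod p,
        ∃ g : G →+ ℤ, (Int.castAddHom (ZMod p)).comp g = h) := by
  classical
  have hinf : Cardinal.aleph0 ≤ lam := hcof ▸ Ordinal.cof_ord_le lam
  have hinf' : Cardinal.aleph0 ≤ Order.succ lam := hinf.trans (Order.le_succ lam)
  obtain ⟨s, hs, hst⟩ := cs_star lam hinf hstar
  generalize hKdef : lam.ord.ToType = K at s hs hst
  have hK : Cardinal.mk K = lam := by rw [← hKdef]; simp
  let L := (Order.succ lam).ord.ToType
  have hL : Cardinal.mk L = Order.succ lam := by simp [L]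
  have hKinf : Infinite K := by rw [Cardinal.infinite_iff, hK]; exact hinf
  have hLinf : Infinite L := by rw [Cardinal.infinite_iff, hL]; exact hinf'
  have hIic : ∀ i : L, Cardinal.mk (Set.Iic i) ≤ lam := by
    intro i
    have := Cardinal.mk_Iic_lt i (by simp [L]) (by rw [hL]; exact hinf')
    rw [hL] at this
    exact Order.lt_succ_iff.1 this
  -- enumeration
  have hKK : Cardinal.mk (K × K) = lam := by
    rw [Cardinal.mk_prod, Cardinal.lift_id, hK, Cardinal.mul_eq_self hinf]
  obtain ⟨e, he⟩ : ∃ e : L → ℕ × (K × K → ℤ), Function.Surjective e := by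
    have h1 : Cardinal.mk (K × K → ℤ) ≤ Order.succ lam := by
      rw [← Cardinal.power_def, hKK, ← hch, ← Cardinal.power_self_eq hinf]
      apply Cardinal.power_le_power_right
      simpa using hinf
    have h2 : Cardinal.mk (ℕ × (K × K → ℤ)) ≤ Cardinal.mk L := by
      rw [Cardinal.mk_prod, Cardinal.lift_id, Cardinal.lift_id, hL]
      exact Cardinal.mul_le_of_le hinf' (by simpa using hinf') h1
    obtain ⟨r⟩ := h2
    exact ⟨_, Function.invFun_surjective r.injective⟩
  obtain ⟨z, hz, hgood⟩ := cs_construct (K := K) (L := L) s e (by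
    intro i g hg
    obtain ⟨z, h1, h2⟩ := cs_pigeon lam hcof hinf hsmall (Set.Iic i) K (hIic i) hK
      (fun n j b => g j.1 (s i n, b)) (fun n j => hg j.1 (s i n))
    exact ⟨z, h1, fun j hj => h2 ⟨j, hj⟩⟩)
  have hΓ : Cardinal.mk ((K × K) ⊕ (L × ℕ)) = Order.succ lam := by
    rw [Cardinal.mk_sum, Cardinal.lift_id, Cardinal.lift_id, hKK, Cardinal.mk_prod,
      Cardinal.lift_id, Cardinal.lift_id, hL, Cardinal.mk_nat, Cardinal.mul_aleph0_eq hinf',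
      Cardinal.add_eq_right hinf' (Order.le_succ lam)]
  have hcard : Cardinal.mk (CsG s z) = Order.succ lam := by
    apply le_antisymm
    · have h1 : Cardinal.mk (CsG s z) ≤ Cardinal.mk (((K × K) ⊕ (L × ℕ)) →₀ ℤ) :=
        Cardinal.mk_le_of_surjective QuotientAddGroup.mk_surjective
      refine h1.trans ?_
      rw [Cardinal.mk_finsupp_of_infinite, hΓ]
      exact max_le le_rfl (by simpa using hinf')
    · refine hL.symm.le.trans ?_
      refine Cardinal.mk_le_of_injective (f := fun i => csy s z i 0) ?_
      intro i j hij
      by_contra hne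
      choose Y hY hY0 using fun i' => cs_sol_rat s z (V := ℚ) (fun _ => 0) i' (if i' = i then 1 else 0)
      obtain ⟨φ, -, hφ⟩ := cs_hom s z _ Y hY
      have h1 := hφ i 0
      have h2 := hφ j 0
      simp only at hij
      rw [hij, h2, hY0, hY0] at h1
      simp [Ne.symm hne] at h1
  refine ⟨CsG s z, inferInstance, hcard, ?_, ?_, ?_⟩
  · intro S hS
    have hSc : Countable S := by
      rw [← Cardinal.mk_le_aleph0_iff]
      rw [← Cardinal.succ_aleph0] at hS
      exact Order.lt_succ_iff.1 hS
    choose c hc using fun g : CsG s z => QuotientAddGroup.mk_surjective g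
    let T : Set L := ⋃ g : S, {i | ∃ n, Sum.inr (i, n) ∈ (c g.1).support}
    have hT : T.Countable := by
      refine Set.countable_iUnion fun g => ?_
      have : {i | ∃ n, Sum.inr (i, n) ∈ (c g.1).support} ⊆
          some ⁻¹' ((fun t : (K × K) ⊕ (L × ℕ) =>
            (Sum.elim (fun _ => none) (fun q => some q.1) t : Option L)) ''
              ((c g.1).support : Set _)) := by
        rintro i ⟨n, hn⟩
        exact ⟨_, hn, rfl⟩
      refine Set.Countable.mono this ?_
      exact (((c g.1).support.countable_toSet.image _).preimage (Option.some_injective _))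
    have hT' : Cardinal.mk T ≤ lam := (Cardinal.le_aleph0_iff_set_countable.2 hT).trans hinf
    obtain ⟨N, hN⟩ := hst T hT'
    obtain ⟨M, hM, hx, hy⟩ := cs_free_stage s z hs hz T N hN
    have hSM : ∀ g ∈ S, g ∈ M := by
      intro g hg
      rw [← hc g]
      refine cs_ind s z M T hx hy (c g) fun q hq => ?_
      exact Set.mem_iUnion.2 ⟨⟨g, hg⟩, q.2, hq⟩
    let φ : S →+ M := S.subtype.codRestrict M.toAddSubgroup (fun g => hSM g.1 g.2)
    refine cs_free_of_inj φ.toIntLinearMap ?_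
    intro a b hab
    exact Subtype.ext (congrArg (fun t : M => (t : CsG s z)) hab)
  · intro hfree
    let b := Module.Free.chooseBasis ℤ (CsG s z)
    let U : Set (Module.Free.ChooseBasisIndex ℤ (CsG s z)) :=
      ⋃ k, ((b.repr (csx s z k)).support : Set _)
    have hU : Cardinal.mk U ≤ lam := by
      refine (Cardinal.mk_iUnion_le _).trans ?_
      rw [hKK]
      refine Cardinal.mul_le_of_le hinf le_rfl (ciSup_le' fun k => ?_)
      exact (Cardinal.lt_aleph0_of_finite _).le.trans hinf
    have hne : ∃ t, t ∉ U := by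
      by_contra hcon
      push Not at hcon
      have h1 : Cardinal.mk (Module.Free.ChooseBasisIndex ℤ (CsG s z)) ≤ lam := by
        rw [← Cardinal.mk_univ, ← Set.eq_univ_of_forall hcon]; exact hU
      have h2 : Cardinal.mk (CsG s z) ≤ lam := by
        rw [Cardinal.mk_congr b.repr.toEquiv]
        rcases isEmpty_or_nonempty (Module.Free.ChooseBasisIndex ℤ (CsG s z)) with h | h
        · exact (Cardinal.lt_aleph0_of_finite _).le.trans hinf
        · rw [Cardinal.mk_finsupp_of_infinite']
          exact max_le h1 (by simpa using hinf)
      rw [hcard] at h2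
      exact absurd (Order.lt_succ lam) (not_lt.2 h2)
    obtain ⟨t, ht⟩ := hne
    have h0 := cs_zero s z (b.coord t).toAddMonoidHom (fun k => by
      by_contra hk
      exact ht (Set.mem_iUnion.2 ⟨k, Finsupp.mem_support_iff.2 hk⟩))
    have h1 : b.coord t (b t) = 0 := DFunLike.congr_fun h0 (b t)
    simp at h1
  · intro p hp h
    exact cs_lift s e he z hs hz (fun j => hst (Set.Iio j) ((Cardinal.mk_le_mk_of_subset
      Set.Iio_subset_Iic_self).trans (hIic j))) hgood p hp h
end

section
/- Let p be a prime, F a free abelian group, F̂ the p-adic completion of F (with F identified with its image under the canonical embedding F → F̂), and A a p-pure subgroup of F̂ containing F. Then the restriction map from Hom(A, ℤ/pℤ) to Hom(F, ℤ/pℤ) is a bijection: every group homomorphism F → ℤ/pℤ extends uniquely to a group homomorphism A → ℤ/pℤ. -/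
universe u

/-- If `A` is a `p`-pure subgroup of the `p`-adic completion of a free abelian group `F`
containing (the canonical image of) `F`, then restriction along `F → A` is a bijection
from `Hom(A, ℤ/pℤ)` to `Hom(F, ℤ/pℤ)`: every homomorphism `F → ℤ/pℤ` extends uniquely
to a homomorphism `A → ℤ/pℤ`. -/
theorem restriction_bijective (p : ℕ) (hp : p.Prime)
    (F : Type u) [AddCommGroup F] [Module.Free ℤ F]
    (A : AddSubgroup (AdicCompletion (Ideal.span {(p : ℤ)}) F))
    (hFA : ∀ x : F, (AdicCompletion.of (Ideal.span {(p : ℤ)}) F) x ∈ A)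
    (hpure : ∀ a ∈ A, (∃ b ∈ A, p • b = a) ↔
      (∃ x : AdicCompletion (Ideal.span {(p : ℤ)}) F, p • x = a)) :
    Function.Bijective (fun g : A →+ ZMod p =>
      g.comp (((AdicCompletion.of (Ideal.span {(p : ℤ)}) F).toAddMonoidHom).codRestrict A hFA)) := by
  classical
  have key : ∀ x : AdicCompletion (Ideal.span {(p : ℤ)}) F,
      AdicCompletion.eval (Ideal.span {(p : ℤ)}) F 1 x = 0 → ∃ y, p • y = x := by
    intro x hx
    have hfg : (Ideal.span {(p : ℤ)}).FG := ⟨{(p : ℤ)}, by simp⟩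
    have h1 : x ∈ (AdicCompletion.eval (Ideal.span {(p : ℤ)}) F 1).ker := hx
    rw [← AdicCompletion.pow_smul_top_eq_ker_eval hfg, pow_one,
      Submodule.ideal_span_singleton_smul, Submodule.mem_smul_pointwise_iff_exists] at h1
    obtain ⟨y, -, hy⟩ := h1
    refine ⟨y, ?_⟩
    rw [← hy]
    apply AdicCompletion.ext
    intro n
    have e1 := map_nsmul (AdicCompletion.eval (Ideal.span {(p : ℤ)}) F n) p y
    have e2 := (AdicCompletion.eval (Ideal.span {(p : ℤ)}) F n).map_smul (p : ℤ) y
    rw [AdicCompletion.eval_apply, AdicCompletion.eval_apply] at e1 e2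
    rw [e1, e2, Nat.cast_smul_eq_nsmul]
  constructor
  · intro g₁ g₂ hg
    ext ⟨a, ha⟩
    obtain ⟨x, hx⟩ := Submodule.mkQ_surjective _
      (AdicCompletion.eval (Ideal.span {(p : ℤ)}) F 1 a)
    obtain ⟨y, hy⟩ := key (a - AdicCompletion.of (Ideal.span {(p : ℤ)}) F x) (by
      rw [map_sub, AdicCompletion.eval_of, hx, sub_self])
    obtain ⟨b, hb, hab⟩ := (hpure _ (A.sub_mem ha (hFA x))).2 ⟨y, hy⟩
    have hdec : (⟨a, ha⟩ : A) = p • (⟨b, hb⟩ : A) +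
        ⟨AdicCompletion.of (Ideal.span {(p : ℤ)}) F x, hFA x⟩ := by
      apply Subtype.ext
      change a = p • b + AdicCompletion.of (Ideal.span {(p : ℤ)}) F x
      rw [hab]; abel
    have hx' : g₁ ⟨AdicCompletion.of (Ideal.span {(p : ℤ)}) F x, hFA x⟩ =
        g₂ ⟨AdicCompletion.of (Ideal.span {(p : ℤ)}) F x, hFA x⟩ := DFunLike.congr_fun hg x
    rw [hdec, map_add, map_add, map_nsmul, map_nsmul, hx']
    simp
  · intro f
    have hle : ((Ideal.span {(p : ℤ)}) ^ 1 • ⊤ : Submodule ℤ F) ≤ f.toIntLinearMap.ker := by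
      rw [pow_one, Submodule.ideal_span_singleton_smul]
      intro z hz
      obtain ⟨y, -, rfl⟩ := (Submodule.mem_smul_pointwise_iff_exists _ _ _).1 hz
      rw [LinearMap.mem_ker, map_smul]
      simp
    refine ⟨(((Submodule.liftQ _ f.toIntLinearMap hle).comp
      (AdicCompletion.eval (Ideal.span {(p : ℤ)}) F 1)).toAddMonoidHom).comp A.subtype, ?_⟩
    ext x
    change Submodule.liftQ _ f.toIntLinearMap hle (AdicCompletion.eval (Ideal.span {(p : ℤ)}) F 1
      (AdicCompletion.of (Ideal.span {(p : ℤ)}) F x)) = f x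
    rw [AdicCompletion.eval_of]
    rfl
end
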